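/- arXiv:1407.6316 — 2 statements merged into one kernel-verified Lean document; each statement's English description precedes it below -/
import Mathlib

section
/- Let λ be an antidominant composition and for j ≥ 1 let r_j = |{i : λ_i ≥ j}| be the number of boxes in the j-th row of dg'(λ). Then, in ℤ[x_1,…,x_n], the sum of the monomials x^{k(σ)} over all appropriate fillings σ of dg'(λ) equals the product ∏_{j=1}^{λ_n} e_{r_j}(x_1,…,x_n), where e_k denotes the k-th elementary symmetric polynomial in x_1,…,x_n. -/
open Finset

namespace CO

/-- The column diagram `dg'(λ)` of a composition, as a finset of boxes `(i, j)`,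
`1 ≤ i ≤ n`, `1 ≤ j ≤ λ_i`. -/
def dgF (n : ℕ) (lam : ℕ → ℕ) : Finset (ℕ × ℕ) :=
  (Finset.Icc 1 n).biUnion fun i => (Finset.Icc 1 (lam i)).image fun j => (i, j)

/-- The augmented diagram `d̂g(λ)`: one extra box `(i, 0)` below each column. -/
def augF (n : ℕ) (lam : ℕ → ℕ) : Finset (ℕ × ℕ) :=
  dgF n lam ∪ (Finset.Icc 1 n).image fun i => (i, 0)

/-- The box `d(u)` directly below a box. -/
def dbox (u : ℕ × ℕ) : ℕ × ℕ := (u.1, u.2 - 1)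

/-- The augmented filling `σ̂`: equal to `σ` on positive rows and to `i` on `(i, 0)`. -/
def aug (σ : ℕ × ℕ → ℕ) (u : ℕ × ℕ) : ℕ := if u.2 = 0 then u.1 else σ u

/-- A filling takes values in `{1, …, n}` on the diagram. -/
def IsFilling (n : ℕ) (lam : ℕ → ℕ) (σ : ℕ × ℕ → ℕ) : Prop :=
  ∀ u ∈ dgF n lam, 1 ≤ σ u ∧ σ u ≤ n

/-- Attacking boxes: same row, or consecutive rows with the lower box to the right. -/
def Attack (u v : ℕ × ℕ) : Prop :=
  u ≠ v ∧ (u.2 = v.2 ∨ (u.2 = v.2 + 1 ∧ u.1 < v.1) ∨ (v.2 = u.2 + 1 ∧ v.1 < u.1))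

/-- A non-attacking filling: `σ̂` takes distinct values on attacking pairs of the
augmented diagram. -/
def NonAttacking (n : ℕ) (lam : ℕ → ℕ) (σ : ℕ × ℕ → ℕ) : Prop :=
  ∀ u ∈ augF n lam, ∀ v ∈ augF n lam, Attack u v → aug σ u ≠ aug σ v

/-- The arm of a box `u`. -/
def armF (n : ℕ) (lam : ℕ → ℕ) (u : ℕ × ℕ) : Finset (ℕ × ℕ) :=
  ((dgF n lam).filter fun v => v.1 < u.1 ∧ v.2 = u.2 ∧ lam v.1 ≤ lam u.1) ∪
    ((augF n lam).filter fun v => u.1 < v.1 ∧ v.2 + 1 = u.2 ∧ lam v.1 < lam u.1)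

/-- `a(u) = |arm(u)|`. -/
def armCard (n : ℕ) (lam : ℕ → ℕ) (u : ℕ × ℕ) : ℕ := (armF n lam u).card

/-- The number of inversions of `σ̂`: attacking pairs `u, u'` with `σ̂(u) < σ̂(u')`
and (same row with `u` to the left, or `u'` one row above `u` strictly to the left). -/
def invCard (n : ℕ) (lam : ℕ → ℕ) (σ : ℕ × ℕ → ℕ) : ℕ :=
  ((augF n lam ×ˢ augF n lam).filter fun p =>
    aug σ p.1 < aug σ p.2 ∧
      ((p.1.2 = p.2.2 ∧ p.1.1 < p.2.1) ∨ (p.2.2 = p.1.2 + 1 ∧ p.2.1 < p.1.1))).card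

/-- The descent set of `σ̂`. -/
def desF (n : ℕ) (lam : ℕ → ℕ) (σ : ℕ × ℕ → ℕ) : Finset (ℕ × ℕ) :=
  (dgF n lam).filter fun u => aug σ (dbox u) < aug σ u

/-- The statistic `coinv(σ̂)` (as an integer). -/
def coinv (n : ℕ) (lam : ℕ → ℕ) (σ : ℕ × ℕ → ℕ) : ℤ :=
  (∑ u ∈ dgF n lam, (armCard n lam u : ℤ)) - invCard n lam σ +
    (((Finset.Icc 1 n ×ˢ Finset.Icc 1 n).filter fun p =>
      p.1 < p.2 ∧ lam p.1 ≤ lam p.2).card : ℤ) +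
    ∑ u ∈ desF n lam σ, (armCard n lam u : ℤ)

/-- The statistic `T(σ)`. -/
def Tstat (n : ℕ) (lam : ℕ → ℕ) (σ : ℕ × ℕ → ℕ) : ℤ :=
  coinv n lam σ -
    ∑ u ∈ (dgF n lam).filter fun u => aug σ u ≠ aug σ (dbox u), (armCard n lam u : ℤ)

/-- Antidominant composition: `λ_1 ≤ ⋯ ≤ λ_n`. -/
def Antidominant (n : ℕ) (lam : ℕ → ℕ) : Prop :=
  ∀ i j, 1 ≤ i → i ≤ j → j ≤ n → lam i ≤ lam j

/-- Appropriate filling: non-attacking with `T(σ) = 0`. -/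
def Appropriate (n : ℕ) (lam : ℕ → ℕ) (σ : ℕ × ℕ → ℕ) : Prop :=
  IsFilling n lam σ ∧ NonAttacking n lam σ ∧ Tstat n lam σ = 0

/-- The operation `π` on compositions: `π(λ) = (λ_n + 1, λ_1, …, λ_{n-1})`. -/
def piComp (n : ℕ) (lam : ℕ → ℕ) : ℕ → ℕ :=
  fun i => if i = 1 then lam n + 1 else lam (i - 1)

/-- The operation `π` on boxes. -/
def piBox (n : ℕ) (u : ℕ × ℕ) : ℕ × ℕ :=
  if u.1 < n then (u.1 + 1, u.2) else (1, u.2 + 1)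

/-- Extension by zero of a function defined on the diagram. -/
def ext (n : ℕ) (lam : ℕ → ℕ) (f : {u // u ∈ dgF n lam} → ℕ) : ℕ × ℕ → ℕ :=
  fun u => if h : u ∈ dgF n lam then f ⟨u, h⟩ else 0

/-- `qstat(σ) = Σ (l(u) + 1)` over boxes `u` with `σ̂(u) < σ̂(d(u))`. -/
def qstat (n : ℕ) (lam : ℕ → ℕ) (σ : ℕ × ℕ → ℕ) : ℕ :=
  ∑ u ∈ (dgF n lam).filter fun u => aug σ u < aug σ (dbox u), (lam u.1 - u.2 + 1)

end CO

/-!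
For antidominant `λ` the arm of a box `u` consists of the boxes to its left in the same row, and
every inversion of `σ̂` either lies in row `0` or relates such a box `v` to `u` or to `d(u)`. Hence
`T(σ)` is a sum over the pairs `(v, u)` of a contribution depending only on the entries of `d(u)`,
`u` and `v`, which for non-attacking `σ` is never positive. It vanishes exactly when, going
cyclically upwards from the entry of `d(u)`, one meets the entry of `u` strictly before that of `v`.
So `σ` is appropriate iff, row by row and from right to left, every box receives the cyclically
first remaining entry. Once the row below is known, a row is thus determined by its set of entries,
and every `r_j`-subset of `{1, …, n}` occurs: the sum factors over the rows.
-/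

namespace CO

section Greedy

variable {ι α κ : Type*} [LinearOrder ι]

/-- `a` fills the positions in `R` greedily from right to left: the entry at `i` is the one that
`D i` ranks strictly first among those at `i` and at the positions to its left. -/
def IsGreedy [LT κ] (R : Finset ι) (D : ι → α → κ) (a : ι → α) : Prop :=
  ∀ i ∈ R, ∀ i' ∈ R, i' < i → D i (a i) < D i (a i')

lemma IsGreedy.injOn [Preorder κ] {R : Finset ι} {D : ι → α → κ} {a : ι → α}
    (h : IsGreedy R D a) : Set.InjOn a R := by
  intro i hi j hj hij
  by_contra hne
  rcases lt_or_gt_of_ne hne with hlt | hlt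
  · exact (h j hj i hi hlt).ne (by rw [hij])
  · exact (h i hi j hj hlt).ne (by rw [hij])

lemma IsGreedy.congr [LT κ] {R : Finset ι} {D E : ι → α → κ} {a b : ι → α}
    (h : IsGreedy R D a) (hD : ∀ i ∈ R, D i = E i) (hab : ∀ i ∈ R, a i = b i) :
    IsGreedy R E b := by
  intro i hi i' hi' hlt
  rw [← hD i hi, ← hab i hi, ← hab i' hi']
  exact h i hi i' hi' hlt

variable [DecidableEq α]

lemma IsGreedy.lt_of_eq_of_gt [Preorder κ] {R : Finset ι} {D : ι → α → κ} {a b : ι → α}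
    (ha : IsGreedy R D a) (hb : IsGreedy R D b) (himage : R.image a = R.image b) {i : ι}
    (hi : i ∈ R) (hgt : ∀ k ∈ R, i < k → a k = b k) (hne : a i ≠ b i) :
    D i (b i) < D i (a i) := by
  obtain ⟨k, hk, hki⟩ := mem_image.1 (himage ▸ mem_image_of_mem a hi)
  rcases lt_trichotomy k i with hlt | rfl | hlt
  · exact hki ▸ hb i hi k hk hlt
  · exact absurd hki.symm hne
  · exact absurd (ha.injOn hk hi ((hgt k hk hlt).trans hki)) hlt.ne'

lemma IsGreedy.eqOn [Preorder κ] {R : Finset ι} {D : ι → α → κ} {a b : ι → α}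
    (ha : IsGreedy R D a) (hb : IsGreedy R D b) (himage : R.image a = R.image b) :
    Set.EqOn a b R := by
  by_contra hne
  have hdiff : {i ∈ R | a i ≠ b i}.Nonempty := by
    simpa [Set.EqOn, Finset.Nonempty] using hne
  obtain ⟨i, hi, hmax⟩ := exists_max_image _ id hdiff
  obtain ⟨hiR, hab⟩ := mem_filter.1 hi
  have hgt : ∀ k ∈ R, i < k → a k = b k := fun k hk hik => by
    by_contra hk'
    exact (hmax k (mem_filter.2 ⟨hk, hk'⟩)).not_gt hik
  exact (ha.lt_of_eq_of_gt hb himage hiR hgt hab).asymm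
    (hb.lt_of_eq_of_gt ha himage.symm hiR (fun k hk hik => (hgt k hk hik).symm) hab.symm)

lemma exists_isGreedy_image_eq [Nonempty α] [LinearOrder κ] (R : Finset ι) (D : ι → α → κ)
    (S : Finset α) (hD : ∀ i ∈ R, Set.InjOn (D i) S) (hcard : #R = #S) :
    ∃ a : ι → α, IsGreedy R D a ∧ R.image a = S := by
  induction R using Finset.induction_on_max generalizing S with
  | empty =>
    exact ⟨fun _ => Classical.arbitrary α, by simp [IsGreedy], by
      simpa [eq_comm] using hcard⟩
  | insert m R hm ih =>
    have hmR : m ∉ R := fun h => (hm m h).false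
    rw [card_insert_of_notMem hmR] at hcard
    obtain ⟨s, hs, hmin⟩ := exists_min_image S (D m) (card_pos.1 (by omega))
    obtain ⟨a, ha, himage⟩ := ih (S.erase s)
      (fun i hi => (hD i (mem_insert_of_mem hi)).mono (by simp))
      (by rw [card_erase_of_mem hs]; omega)
    have hupdate : ∀ i ∈ R, Function.update a m s i = a i := fun i hi =>
      Function.update_of_ne (ne_of_mem_of_not_mem hi hmR) _ _
    have hfirst : ∀ i ∈ R, D m s < D m (a i) := fun i hi => by
      obtain ⟨hne, hmem⟩ := mem_erase.1 (himage ▸ mem_image_of_mem a hi)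
      exact (hmin _ hmem).lt_of_ne fun h => hne (hD m (mem_insert_self m R) hs hmem h).symm
    refine ⟨Function.update a m s, fun i hi i' hi' hlt => ?_, ?_⟩
    · rcases mem_insert.1 hi' with rfl | hi'R
      · rcases mem_insert.1 hi with rfl | hiR
        · exact absurd hlt (lt_irrefl _)
        · exact absurd (hm i hiR) hlt.not_gt
      rcases mem_insert.1 hi with rfl | hiR
      · simpa [hupdate i' hi'R] using hfirst i' hi'R
      · simpa [hupdate i hiR, hupdate i' hi'R] using ha i hiR i' hi'R hlt
    · rw [image_insert, Function.update_self, image_congr hupdate, himage, insert_erase hs]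

end Greedy

section CyclicKey

variable {α : Type*} [LinearOrder α]

/-- Comparing `cyclicKey b a` as `a` varies is the cyclic order cut open just below `b`: first the
elements from `b` upwards, then those smaller than `b`. -/
def cyclicKey (b a : α) : Bool ×ₗ α := toLex (decide (a < b), a)

lemma cyclicKey_injective (b : α) : Function.Injective (cyclicKey b) := fun _ _ h =>
  congrArg (fun k => (ofLex k).2) h

/-- The contribution to `T` of a box `u` and a box `v` to its left in the same row, where `b`, `a`,
`c` are the entries of `d(u)`, `u`, `v`. -/
def tripleDefect (b a c : α) : ℤ :=
  (if b ≤ a then 1 else 0) - (if c < a then 1 else 0) - (if b < c then 1 else 0)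

lemma tripleDefect_nonpos {a b c : α} (hca : c ≠ a) : tripleDefect b a c ≤ 0 := by
  unfold tripleDefect
  grind

lemma cyclicKey_lt_cyclicKey_iff {a b c : α} :
    cyclicKey b a < cyclicKey b c ↔ (c ≠ a ∧ c ≠ b) ∧ tripleDefect b a c = 0 := by
  unfold cyclicKey tripleDefect
  rw [Prod.Lex.toLex_lt_toLex]
  simp only [Bool.lt_iff]
  grind

end CyclicKey

section Diagram

variable {n : ℕ} {lam : ℕ → ℕ} {σ τ : ℕ × ℕ → ℕ}

lemma mem_dgF {u : ℕ × ℕ} :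
    u ∈ dgF n lam ↔ (1 ≤ u.1 ∧ u.1 ≤ n) ∧ 1 ≤ u.2 ∧ u.2 ≤ lam u.1 := by
  obtain ⟨i, j⟩ := u
  simp [dgF]

lemma mem_augF {u : ℕ × ℕ} : u ∈ augF n lam ↔ (1 ≤ u.1 ∧ u.1 ≤ n) ∧ u.2 ≤ lam u.1 := by
  obtain ⟨i, j⟩ := u
  simp only [augF, mem_union, mem_dgF, mem_image, mem_Icc, Prod.mk.injEq]
  grind

lemma aug_congr (h : ∀ u ∈ dgF n lam, σ u = τ u) {u : ℕ × ℕ} (hu : u ∈ augF n lam) :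
    aug σ u = aug τ u := by
  unfold aug
  split_ifs with h0
  · rfl
  · have := mem_augF.1 hu
    exact h u (mem_dgF.2 (by omega))

/-- The `j`-th row of the augmented diagram, encoded by the column indices of its boxes. -/
def row (n : ℕ) (lam : ℕ → ℕ) (j : ℕ) : Finset ℕ := {i ∈ Icc 1 n | j ≤ lam i}

lemma mem_row {i j : ℕ} : i ∈ row n lam j ↔ (1 ≤ i ∧ i ≤ n) ∧ j ≤ lam i := by
  simp [row]

lemma mk_mem_dgF {i j : ℕ} : (i, j + 1) ∈ dgF n lam ↔ i ∈ row n lam (j + 1) := by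
  simp [mem_dgF, mem_row]

lemma forall_mem_dgF {P : ℕ × ℕ → Prop} :
    (∀ u ∈ dgF n lam, P u) ↔ ∀ j, ∀ i ∈ row n lam (j + 1), P (i, j + 1) := by
  refine ⟨fun h j i hi => h _ (mk_mem_dgF.2 hi), ?_⟩
  rintro h ⟨i, _ | j⟩ hu
  · simp [mem_dgF] at hu
  · exact h j i (mk_mem_dgF.1 hu)

lemma row_eq_empty (hanti : Antidominant n lam) {j : ℕ} (hj : lam n < j) :
    row n lam j = ∅ := by
  refine eq_empty_of_forall_notMem fun i hi => ?_
  rw [mem_row] at hi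
  have := hanti i n hi.1.1 hi.1.2 le_rfl
  omega

lemma Icc_one_eq_map (m : ℕ) :
    Icc 1 m = (univ : Finset (Fin m)).map (Fin.valEmbedding.trans (addRightEmbedding 1)) := by
  rw [← map_map, Fin.map_valEmbedding_univ, Nat.Iio_eq_range, range_eq_Ico, map_add_right_Ico]
  rfl

lemma prod_Icc_one {M : Type*} [CommMonoid M] (m : ℕ) (g : ℕ → M) :
    ∏ j ∈ Icc 1 m, g j = ∏ j : Fin m, g (j + 1) := by
  rw [Icc_one_eq_map, prod_map]
  rfl

lemma prod_dgF {M : Type*} [CommMonoid M] (hanti : Antidominant n lam) (g : ℕ × ℕ → M) :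
    ∏ u ∈ dgF n lam, g u = ∏ j : Fin (lam n), ∏ i ∈ row n lam (j + 1), g (i, j + 1) := by
  rw [← prod_Icc_one (lam n) fun j => ∏ i ∈ row n lam j, g (i, j)]
  refine prod_finset_product_right _ _ _ fun u => ?_
  rw [mem_dgF, mem_Icc, mem_row]
  have := hanti u.1 n
  omega

/-- The pairs `(v, u)` of boxes of the diagram in a common row, with `v` to the left of `u`. -/
def rowPairs (n : ℕ) (lam : ℕ → ℕ) : Finset ((ℕ × ℕ) × (ℕ × ℕ)) :=
  {p ∈ dgF n lam ×ˢ dgF n lam | p.1.2 = p.2.2 ∧ p.1.1 < p.2.1}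

lemma mem_rowPairs {p : (ℕ × ℕ) × (ℕ × ℕ)} :
    p ∈ rowPairs n lam ↔
      (p.1 ∈ dgF n lam ∧ p.2 ∈ dgF n lam) ∧ p.1.2 = p.2.2 ∧ p.1.1 < p.2.1 := by
  simp [rowPairs]

lemma forall_mem_rowPairs {P : ℕ × ℕ → ℕ × ℕ → Prop} :
    (∀ p ∈ rowPairs n lam, P p.1 p.2) ↔
      ∀ j, ∀ i ∈ row n lam (j + 1), ∀ i' ∈ row n lam (j + 1), i' < i →
        P (i', j + 1) (i, j + 1) := by
  constructor
  · intro h j i hi i' hi' hlt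
    exact h ((i', j + 1), (i, j + 1))
      (mem_rowPairs.2 ⟨⟨mk_mem_dgF.2 hi', mk_mem_dgF.2 hi⟩, rfl, hlt⟩)
  · rintro h ⟨⟨i', _ | j⟩, ⟨i, k⟩⟩ hp
    · simp [mem_rowPairs, mem_dgF] at hp
    · obtain ⟨⟨hi', hi⟩, hrow, hlt⟩ := mem_rowPairs.1 hp
      obtain rfl : j + 1 = k := hrow
      exact h j i (mk_mem_dgF.1 hi) i' (mk_mem_dgF.1 hi') hlt

end Diagram

section Statistic

variable {n : ℕ} {lam : ℕ → ℕ}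

lemma armCard_eq_card_left (hanti : Antidominant n lam) {u : ℕ × ℕ} (hu : u ∈ dgF n lam) :
    armCard n lam u = #{v ∈ dgF n lam | v.2 = u.2 ∧ v.1 < u.1} := by
  unfold armCard armF
  congr 1
  ext v
  simp only [mem_union, mem_filter, mem_dgF, mem_augF] at hu ⊢
  have := hanti u.1 v.1
  have := hanti v.1 u.1
  omega

lemma sum_rowPairs_snd (hanti : Antidominant n lam) (f : ℕ × ℕ → ℤ) :
    ∑ p ∈ rowPairs n lam, f p.2 = ∑ u ∈ dgF n lam, armCard n lam u * f u := by
  rw [rowPairs, sum_filter, sum_product_right]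
  refine sum_congr rfl fun u hu => ?_
  dsimp only
  rw [← sum_filter, sum_const, armCard_eq_card_left hanti hu, nsmul_eq_mul]

lemma card_sameRow_inversions (hanti : Antidominant n lam) (σ : ℕ × ℕ → ℕ) :
    #{p ∈ augF n lam ×ˢ augF n lam |
        aug σ p.1 < aug σ p.2 ∧ p.1.2 = p.2.2 ∧ p.1.1 < p.2.1} =
      #{p ∈ Icc 1 n ×ˢ Icc 1 n | p.1 < p.2 ∧ lam p.1 ≤ lam p.2} +
        #{p ∈ rowPairs n lam | aug σ p.1 < aug σ p.2} := by
  rw [← card_filter_add_card_filter_not fun p : (ℕ × ℕ) × (ℕ × ℕ) => p.1.2 = 0]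
  congr 1
  · refine card_bij' (fun p _ => (p.1.1, p.2.1)) (fun p _ => ((p.1, 0), (p.2, 0))) ?_ ?_ ?_ ?_
    · intro p hp
      have := hanti p.1.1 p.2.1
      simp only [mem_filter, mem_product, mem_augF, mem_Icc] at hp ⊢
      omega
    · intro p hp
      simp only [mem_filter, mem_product, mem_augF, mem_Icc] at hp ⊢
      simp only [aug, if_true, true_and, and_true]
      omega
    · rintro ⟨⟨i, j⟩, ⟨i', j'⟩⟩ hp
      simp only [mem_filter] at hp
      simp only [Prod.mk.injEq, true_and]
      omega
    · exact fun _ _ => rfl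
  · congr 1
    ext p
    simp only [mem_filter, mem_product, mem_rowPairs, mem_augF, mem_dgF]
    omega

lemma card_consecutiveRow_inversions (hanti : Antidominant n lam) (σ : ℕ × ℕ → ℕ) :
    #{p ∈ augF n lam ×ˢ augF n lam |
        aug σ p.1 < aug σ p.2 ∧ p.2.2 = p.1.2 + 1 ∧ p.2.1 < p.1.1} =
      #{p ∈ rowPairs n lam | aug σ (dbox p.2) < aug σ p.1} := by
  refine card_bij' (fun p _ => (p.2, (p.1.1, p.1.2 + 1))) (fun p _ => (dbox p.2, p.1)) ?_ ?_ ?_ ?_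
  · rintro ⟨⟨i, j⟩, ⟨i', j'⟩⟩ hp
    have := hanti i' i
    simp only [mem_filter, mem_product, mem_augF, mem_rowPairs, mem_dgF] at hp ⊢
    simp only [dbox, Nat.add_sub_cancel]
    omega
  · intro p hp
    simp only [mem_filter, mem_product, mem_augF, mem_rowPairs, mem_dgF] at hp ⊢
    simp only [dbox] at hp ⊢
    omega
  · exact fun _ _ => rfl
  · rintro ⟨⟨i, j⟩, ⟨i', j'⟩⟩ hp
    simp only [mem_filter, mem_rowPairs, mem_dgF] at hp
    simp only [dbox, Prod.mk.injEq, true_and]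
    omega

lemma invCard_eq (hanti : Antidominant n lam) (σ : ℕ × ℕ → ℕ) :
    invCard n lam σ =
      #{p ∈ Icc 1 n ×ˢ Icc 1 n | p.1 < p.2 ∧ lam p.1 ≤ lam p.2} +
        #{p ∈ rowPairs n lam | aug σ p.1 < aug σ p.2} +
        #{p ∈ rowPairs n lam | aug σ (dbox p.2) < aug σ p.1} := by
  rw [← card_sameRow_inversions hanti, ← card_consecutiveRow_inversions hanti, invCard,
    ← card_union_of_disjoint, ← filter_or]
  · simp only [and_or_left]
  · exact disjoint_filter.2 fun p _ h h' => by omega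

lemma Tstat_eq_sum_tripleDefect (hanti : Antidominant n lam) (σ : ℕ × ℕ → ℕ) :
    Tstat n lam σ =
      ∑ p ∈ rowPairs n lam, tripleDefect (aug σ (dbox p.2)) (aug σ p.2) (aug σ p.1) := by
  have harm : ∑ u ∈ dgF n lam, (armCard n lam u : ℤ) +
      ∑ u ∈ desF n lam σ, (armCard n lam u : ℤ) -
      ∑ u ∈ dgF n lam with aug σ u ≠ aug σ (dbox u), (armCard n lam u : ℤ) =
      ∑ p ∈ rowPairs n lam, if aug σ (dbox p.2) ≤ aug σ p.2 then 1 else 0 := by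
    rw [sum_rowPairs_snd hanti fun u => if aug σ (dbox u) ≤ aug σ u then 1 else 0, desF,
      sum_filter, sum_filter, ← sum_add_distrib, ← sum_sub_distrib]
    refine sum_congr rfl fun u _ => ?_
    rw [mul_ite, mul_one, mul_zero]
    split_ifs <;> omega
  simp only [tripleDefect, sum_sub_distrib]
  rw [← harm, Tstat, coinv, invCard_eq hanti, sum_boole, sum_boole]
  push_cast
  ring

end Statistic

section RowGreedy

variable {n : ℕ} {lam : ℕ → ℕ} {σ τ : ℕ × ℕ → ℕ}

lemma nonAttacking_iff_forall_mem_rowPairs (hanti : Antidominant n lam) :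
    NonAttacking n lam σ ↔
      ∀ p ∈ rowPairs n lam, aug σ p.1 ≠ aug σ p.2 ∧ aug σ p.1 ≠ aug σ (dbox p.2) := by
  constructor
  · intro h p hp
    simp only [mem_rowPairs, mem_dgF] at hp
    refine ⟨h _ (mem_augF.2 (by omega)) _ (mem_augF.2 (by omega)) ?_,
      h _ (mem_augF.2 (by omega)) _ (mem_augF.2 (by simp only [dbox]; omega)) ?_⟩ <;>
    · simp only [Attack, dbox, ne_eq, Prod.ext_iff]
      omega
  · intro h
    have hsame : ∀ u ∈ augF n lam, ∀ v ∈ augF n lam, u.2 = v.2 → u.1 < v.1 →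
        aug σ u ≠ aug σ v := by
      intro u hu v hv hrow hlt
      rw [mem_augF] at hu hv
      rcases Nat.eq_zero_or_pos u.2 with h0 | hpos
      · simpa [aug, h0, hrow ▸ h0] using hlt.ne
      · exact (h (u, v) (by simp only [mem_rowPairs, mem_dgF]; omega)).1
    have habove : ∀ u ∈ augF n lam, ∀ v ∈ augF n lam, u.2 = v.2 + 1 → u.1 < v.1 →
        aug σ u ≠ aug σ v := by
      intro u hu v hv hrow hlt
      rw [mem_augF] at hu hv
      have := hanti u.1 v.1
      simpa [dbox] using
        (h (u, (v.1, v.2 + 1)) (by simp only [mem_rowPairs, mem_dgF]; omega)).2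
    rintro u hu v hv ⟨hne, hrow | ⟨hrow, hlt⟩ | ⟨hrow, hlt⟩⟩
    · rcases lt_trichotomy u.1 v.1 with hlt | heq | hlt
      · exact hsame u hu v hv hrow hlt
      · exact absurd (Prod.ext heq hrow) hne
      · exact (hsame v hv u hu hrow.symm hlt).symm
    · exact habove u hu v hv hrow hlt
    · exact (habove v hv u hu hrow hlt).symm

/-- Every row of `σ` is filled greedily from right to left, each box `u` preferring the entries
that come first in the cyclic order starting at the entry of `d(u)`. -/
def IsRowGreedy (n : ℕ) (lam : ℕ → ℕ) (σ : ℕ × ℕ → ℕ) : Prop :=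
  ∀ j, IsGreedy (row n lam (j + 1)) (fun i => cyclicKey (aug σ (i, j))) fun i => σ (i, j + 1)

lemma isRowGreedy_iff_forall_mem_rowPairs :
    IsRowGreedy n lam σ ↔ ∀ p ∈ rowPairs n lam,
      cyclicKey (aug σ (dbox p.2)) (aug σ p.2) < cyclicKey (aug σ (dbox p.2)) (aug σ p.1) :=
  (forall_mem_rowPairs (P := fun v u =>
    cyclicKey (aug σ (dbox u)) (aug σ u) < cyclicKey (aug σ (dbox u)) (aug σ v))).symm

/-- No pair in a row contributes positively to `T`, so `T = 0` forces each contribution to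
vanish. -/
lemma appropriate_iff_isRowGreedy (hanti : Antidominant n lam) :
    Appropriate n lam σ ↔ IsFilling n lam σ ∧ IsRowGreedy n lam σ := by
  refine and_congr_right fun _ => ?_
  rw [nonAttacking_iff_forall_mem_rowPairs hanti, Tstat_eq_sum_tripleDefect hanti,
    isRowGreedy_iff_forall_mem_rowPairs]
  simp only [cyclicKey_lt_cyclicKey_iff, forall_and]
  exact and_congr_right fun h =>
    sum_eq_zero_iff_of_nonpos fun p hp => tripleDefect_nonpos (h.1 p hp)

lemma IsRowGreedy.congr (hσ : IsRowGreedy n lam σ) (h : ∀ u ∈ dgF n lam, σ u = τ u) :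
    IsRowGreedy n lam τ := fun j =>
  (hσ j).congr
    (fun i hi => by
      rw [mem_row] at hi
      rw [aug_congr h (mem_augF.2 ⟨hi.1, (Nat.le_succ j).trans hi.2⟩)])
    fun i hi => h _ (mk_mem_dgF.2 hi)

/-- The set of entries of `σ` in the `j`-th row. -/
def rowEntries (n : ℕ) (lam : ℕ → ℕ) (σ : ℕ × ℕ → ℕ) (j : ℕ) : Finset ℕ :=
  (row n lam j).image fun i => σ (i, j)

lemma rowEntries_congr (h : ∀ u ∈ dgF n lam, σ u = τ u) (j : ℕ) :
    rowEntries n lam σ (j + 1) = rowEntries n lam τ (j + 1) :=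
  image_congr fun _ hi => h _ (mk_mem_dgF.2 hi)

lemma isFilling_iff_rowEntries_subset :
    IsFilling n lam σ ↔ ∀ j, rowEntries n lam σ (j + 1) ⊆ Icc 1 n := by
  simp only [IsFilling, forall_mem_dgF, rowEntries, image_subset_iff, mem_Icc]

lemma IsRowGreedy.card_rowEntries (hσ : IsRowGreedy n lam σ) (j : ℕ) :
    #(rowEntries n lam σ (j + 1)) = #(row n lam (j + 1)) :=
  card_image_of_injOn (hσ j).injOn

lemma IsRowGreedy.prod_rowEntries {M : Type*} [CommMonoid M] (hσ : IsRowGreedy n lam σ)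
    (y : ℕ → M) (j : ℕ) :
    ∏ k ∈ rowEntries n lam σ (j + 1), y k = ∏ i ∈ row n lam (j + 1), y (σ (i, j + 1)) :=
  prod_image (hσ j).injOn

lemma IsRowGreedy.eqOn (hσ : IsRowGreedy n lam σ) (hτ : IsRowGreedy n lam τ)
    (hentries : ∀ j, rowEntries n lam σ (j + 1) = rowEntries n lam τ (j + 1)) :
    ∀ u ∈ dgF n lam, σ u = τ u := by
  have haug : ∀ j, ∀ i ∈ row n lam j, aug σ (i, j) = aug τ (i, j) := by
    intro j
    induction j with
    | zero => exact fun _ _ => rfl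
    | succ j ih =>
      have hbelow : ∀ i ∈ row n lam (j + 1), aug τ (i, j) = aug σ (i, j) := fun i hi =>
        (ih i (by rw [mem_row] at hi ⊢; omega)).symm
      exact (hσ j).eqOn
        ((hτ j).congr (fun i hi => by rw [hbelow i hi]) fun _ _ => rfl) (hentries j)
  exact forall_mem_dgF.2 fun j i hi => haug (j + 1) i hi

lemma exists_isRowGreedy_rowEntries_eq (S : ℕ → Finset ℕ)
    (hS : ∀ j, #(row n lam (j + 1)) = #(S j)) :
    ∃ σ, IsRowGreedy n lam σ ∧ ∀ j, rowEntries n lam σ (j + 1) = S j := by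
  choose next hgreedy himage using fun (j : ℕ) (below : ℕ → ℕ) =>
    exists_isGreedy_image_eq (row n lam (j + 1)) (fun i => cyclicKey (below i)) (S j)
      (fun i _ => (cyclicKey_injective (below i)).injOn) (hS j)
  let rows : ℕ → ℕ → ℕ := fun j => Nat.rec id next j
  have haug : ∀ i j, aug (fun u => rows u.2 u.1) (i, j) = rows j i := by
    rintro i (_ | j) <;> rfl
  refine ⟨fun u => rows u.2 u.1, fun j => ?_, fun j => himage j (rows j)⟩
  simp only [haug]
  exact hgreedy j (rows j)

end RowGreedy

section GeneratingFunction

variable {n : ℕ} {lam : ℕ → ℕ}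

lemma ext_apply (f : {u // u ∈ dgF n lam} → ℕ) (u : {u // u ∈ dgF n lam}) :
    ext n lam f u = f u :=
  dif_pos u.2

open Classical in
/-- The appropriate fillings of the diagram, as functions on its boxes. -/
noncomputable def appropriateFillings (n : ℕ) (lam : ℕ → ℕ) :
    Finset ({u // u ∈ dgF n lam} → ℕ) :=
  {f ∈ Fintype.piFinset fun _ => Icc 1 n | Appropriate n lam (ext n lam f)}

open Classical in
lemma mem_appropriateFillings (hanti : Antidominant n lam) {f : {u // u ∈ dgF n lam} → ℕ} :
    f ∈ appropriateFillings n lam ↔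
      IsFilling n lam (ext n lam f) ∧ IsRowGreedy n lam (ext n lam f) := by
  rw [appropriateFillings, mem_filter, appropriate_iff_isRowGreedy hanti, and_iff_right_iff_imp,
    Fintype.mem_piFinset]
  intro h u
  rw [← ext_apply f u, mem_Icc]
  exact h.1 u u.2

lemma rowEntries_bijOn (hanti : Antidominant n lam) :
    Set.BijOn (fun f (j : Fin (lam n)) => rowEntries n lam (ext n lam f) (j + 1))
      (appropriateFillings n lam)
      (Fintype.piFinset fun j : Fin (lam n) => powersetCard #(row n lam (j + 1)) (Icc 1 n)) := by
  refine ⟨fun f hf => ?_, fun f hf g hg hfg => ?_, fun p hp => ?_⟩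
  · obtain ⟨hfill, hgreedy⟩ := (mem_appropriateFillings hanti).1 hf
    exact Fintype.mem_piFinset.2 fun j => mem_powersetCard.2
      ⟨isFilling_iff_rowEntries_subset.1 hfill j, hgreedy.card_rowEntries j⟩
  · have hentries : ∀ j, rowEntries n lam (ext n lam f) (j + 1) =
        rowEntries n lam (ext n lam g) (j + 1) := fun j => by
      rcases lt_or_ge j (lam n) with hj | hj
      · exact congrFun hfg ⟨j, hj⟩
      · simp [rowEntries, row_eq_empty hanti (Nat.lt_succ_of_le hj)]
    funext u
    simpa only [ext_apply] using ((mem_appropriateFillings hanti).1 hf).2.eqOn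
      ((mem_appropriateFillings hanti).1 hg).2 hentries u u.2
  · have hp' := fun j => mem_powersetCard.1 (Fintype.mem_piFinset.1 hp j)
    let S : ℕ → Finset ℕ := fun j => if hj : j < lam n then p ⟨j, hj⟩ else ∅
    have hS : ∀ j, S j ⊆ Icc 1 n ∧ #(row n lam (j + 1)) = #(S j) := fun j => by
      by_cases hj : j < lam n
      · simpa [S, hj] using ⟨(hp' ⟨j, hj⟩).1, (hp' ⟨j, hj⟩).2.symm⟩
      · simp [S, hj, row_eq_empty hanti (show lam n < j + 1 by omega)]
    obtain ⟨σ, hσ, hentries⟩ := exists_isRowGreedy_rowEntries_eq S fun j => (hS j).2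
    let f : {u // u ∈ dgF n lam} → ℕ := fun u => σ u
    have hext : ∀ u ∈ dgF n lam, σ u = ext n lam f u := fun u hu =>
      (ext_apply f ⟨u, hu⟩).symm
    have hentries' : ∀ j, rowEntries n lam (ext n lam f) (j + 1) = S j := fun j =>
      (rowEntries_congr hext j).symm.trans (hentries j)
    refine ⟨f, (mem_appropriateFillings hanti).2 ⟨?_, hσ.congr hext⟩, ?_⟩
    · exact isFilling_iff_rowEntries_subset.2 fun j => hentries' j ▸ (hS j).1
    · funext j
      simp [hentries', S]

lemma sum_appropriateFillings_prod {M : Type*} [CommSemiring M] (hanti : Antidominant n lam)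
    (y : ℕ → M) :
    ∑ f ∈ appropriateFillings n lam, ∏ u ∈ dgF n lam, y (ext n lam f u) =
      ∏ j : Fin (lam n), ((Icc 1 n).val.map y).esymm #(row n lam (j + 1)) := by
  simp only [esymm_map_val]
  rw [prod_univ_sum]
  obtain ⟨hmaps, hinj, hsurj⟩ := rowEntries_bijOn hanti
  refine sum_nbij _ hmaps hinj hsurj fun f hf => ?_
  rw [prod_dgF hanti]
  exact prod_congr rfl fun j _ =>
    (((mem_appropriateFillings hanti).1 hf).2.prod_rowEntries y j).symm

lemma prod_pow_card_fiber_eq_prod {ι M : Type*} [CommMonoid M] (s : Finset ι) (σ : ι → ℕ)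
    (hσ : ∀ u ∈ s, σ u ∈ Icc 1 n) (y : ℕ → M) :
    ∏ i : Fin n, y (i + 1) ^ #{u ∈ s | σ u = i + 1} = ∏ u ∈ s, y (σ u) := by
  rw [← prod_fiberwise_of_maps_to' hσ, prod_Icc_one]
  simp only [prod_const]

end GeneratingFunction

end CO

open CO in
open Classical in
theorem sum_appropriate_eq_prod_esymm_general {R : Type*} [CommSemiring R] (n : ℕ) (lam : ℕ → ℕ)
    (hanti : Antidominant n lam) :
    ∑ f ∈ (Fintype.piFinset fun _ : {u // u ∈ dgF n lam} => Finset.Icc 1 n).filter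
        fun f => Appropriate n lam (ext n lam f),
      ∏ i : Fin n,
        (MvPolynomial.X i : MvPolynomial (Fin n) R) ^
          ((dgF n lam).filter fun u => ext n lam f u = (i : ℕ) + 1).card
    = ∏ j ∈ Finset.Icc 1 (lam n),
        MvPolynomial.esymm (Fin n) R ((Finset.Icc 1 n).filter fun i => j ≤ lam i).card := by
  obtain ⟨y, hy⟩ : ∃ y : ℕ → MvPolynomial (Fin n) R, ∀ i : Fin n, y (i + 1) = MvPolynomial.X i :=
    ⟨Function.extend (fun i : Fin n => (i : ℕ) + 1) MvPolynomial.X 0,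
      ((add_left_injective 1).comp Fin.val_injective).extend_apply _ _⟩
  have hvars : (Icc 1 n).val.map y = univ.val.map MvPolynomial.X := by
    rw [Icc_one_eq_map, map_val, Multiset.map_map]
    exact Multiset.map_congr rfl fun i _ => hy i
  calc
    _ = ∑ f ∈ appropriateFillings n lam, ∏ u ∈ dgF n lam, y (ext n lam f u) := by
      refine sum_congr rfl fun f hf => ?_
      simp only [← hy]
      exact prod_pow_card_fiber_eq_prod _ _ (fun u hu => mem_Icc.2 ((mem_filter.1 hf).2.1 u hu)) y
    _ = ∏ j : Fin (lam n), ((Icc 1 n).val.map y).esymm #(row n lam (j + 1)) :=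
      sum_appropriateFillings_prod hanti y
    _ = ∏ j : Fin (lam n), MvPolynomial.esymm (Fin n) R #(row n lam (j + 1)) := by
      rw [hvars, MvPolynomial.esymm_eq_multiset_esymm]
    _ = _ := (prod_Icc_one (lam n) fun j => MvPolynomial.esymm (Fin n) R #(row n lam j)).symm

open CO in
open Classical in
/-- Corollary: `E_λ(x; 1, ∞)` is a product of fundamental
characters. For antidominant `λ`, the sum of the monomials `x^{k(σ)}` over all
appropriate fillings `σ` of `dg'(λ)` equals `∏_{j=1}^{λ_n} e_{r_j}(x_1, …, x_n)`,
where `r_j` is the number of boxes in the `j`-th row. -/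
theorem sum_appropriate_eq_prod_esymm (n : ℕ) (hn : 1 ≤ n) (lam : ℕ → ℕ)
    (hanti : Antidominant n lam) :
    ∑ f ∈ (Fintype.piFinset fun _ : {u // u ∈ dgF n lam} => Finset.Icc 1 n).filter
        fun f => Appropriate n lam (ext n lam f),
      ∏ i : Fin n,
        (MvPolynomial.X i : MvPolynomial (Fin n) ℤ) ^
          ((dgF n lam).filter fun u => ext n lam f u = (i : ℕ) + 1).card
    = ∏ j ∈ Finset.Icc 1 (lam n),
        MvPolynomial.esymm (Fin n) ℤ ((Finset.Icc 1 n).filter fun i => j ≤ lam i).card :=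
  sum_appropriate_eq_prod_esymm_general n lam hanti
end

section
/- Let μ be an antidominant composition with exactly s ≥ 1 nonzero parts and let a = (a_{n−s+1},…,a_n) be pairwise distinct elements of {1,…,n}. Suppose μ_j = μ_{j+1} for some index j with n−s+1 ≤ j ≤ n−1, and let a' be obtained from a by interchanging the entries a_j and a_{j+1}. Then c_a^μ(k) = c_{a'}^μ(k) for every k ∈ ℤ_{≥0}^n. -/
open Finset

namespace CO

/-- The statistic `asc(τ) = Σ (l(u) + 1)` over boxes `u = (i, j)` with `j ≥ 2` and
`τ(u) < τ(d(u))`. -/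
def ascStat (n : ℕ) (mu : ℕ → ℕ) (τ : ℕ × ℕ → ℕ) : ℕ :=
  ∑ u ∈ (dgF n mu).filter fun u => 2 ≤ u.2 ∧ τ u < τ (dbox u), (mu u.1 - u.2 + 1)

/-- The greedy rule (iii): for boxes in rows `≥ 2`, with `S = τ(arm(u)) ∪ {τ(u)}`,
`τ(u)` is the minimum of `{x ∈ S : x ≥ τ(d(u))}` if nonempty, and `min S` otherwise. -/
def GreedyRule (n : ℕ) (mu : ℕ → ℕ) (τ : ℕ × ℕ → ℕ) : Prop :=
  ∀ u ∈ dgF n mu, 2 ≤ u.2 →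
    (({x ∈ τ '' ↑(armF n mu u) ∪ {τ u} | τ (dbox u) ≤ x}.Nonempty →
        τ u = sInf {x ∈ τ '' ↑(armF n mu u) ∪ {τ u} | τ (dbox u) ≤ x}) ∧
      (¬ {x ∈ τ '' ↑(armF n mu u) ∪ {τ u} | τ (dbox u) ≤ x}.Nonempty →
        τ u = sInf (τ '' ↑(armF n mu u) ∪ {τ u})))

/-- Conditions (i)–(iv) on the fillings `τ` counted by `c_a^μ(k)`. -/
def CCond (n : ℕ) (mu : ℕ → ℕ) (a : ℕ → ℕ) (k : ℕ → ℕ) (τ : ℕ × ℕ → ℕ) : Prop :=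
  (∀ u ∈ dgF n mu, 1 ≤ τ u ∧ τ u ≤ n) ∧
    (∀ j, (j, 1) ∈ dgF n mu → τ (j, 1) = a j) ∧
    (∀ u ∈ dgF n mu, ∀ v ∈ dgF n mu, Attack u v → τ u ≠ τ v) ∧
    GreedyRule n mu τ ∧
    ∀ i, 1 ≤ i → i ≤ n → ((dgF n mu).filter fun u => τ u = i).card = k i

open Classical in
/-- The coefficient `c_a^μ(k) ∈ ℤ[q]`: the generating function `Σ_τ q^{asc(τ)}`
over fillings satisfying (i)–(iv). -/
noncomputable def cCoef (n : ℕ) (mu : ℕ → ℕ) (a : ℕ → ℕ) (k : ℕ → ℕ) : Polynomial ℤ :=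
  ∑ f ∈ (Fintype.piFinset fun _ : {u // u ∈ dgF n mu} => Finset.Icc 1 n).filter
      fun f => CCond n mu a k (ext n mu f),
    Polynomial.X ^ ascStat n mu (ext n mu f)

end CO

/-!
Let `μ_j = μ_{j+1}`. The greedy rule makes each entry minimal among the entries of its arm for the
cyclic order starting at the entry below. The arms of the boxes of columns `j` and `j + 1` in a
given row differ only in that the arm in column `j + 1` also contains the box of column `j`; every
other arm contains a box of column `j` if and only if it contains its neighbour in column `j + 1`.
Hence, after interchanging the two columns in the rows up to some row `r`, the entries `p` and `q`
of the columns `j` and `j + 1` in row `r + 1` may be interchanged as well if `p` comes weakly before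
`q` in the cyclic order starting at the entry below `p`. At the first row where this fails, the
greedy rule already holds with this row and all higher ones left as they are. Interchanging the
columns strictly below that row is the bijection sought: it detects its own stopping row, so it is
an involution, and at the stopping row it only exchanges the contributions to `asc` between the two
columns.
-/

namespace CO

theorem sum_eq_sum_of_add_comp_perm {ι M : Type*} [AddCommMonoid M] [IsAddTorsionFree M]
    {s : Finset ι} (e : Equiv.Perm ι) (he : ∀ u, e u ∈ s ↔ u ∈ s) {f g : ι → M}
    (h : ∀ u ∈ s, f u + f (e u) = g u + g (e u)) : ∑ u ∈ s, f u = ∑ u ∈ s, g u := by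
  have hcomp : ∀ f : ι → M, ∑ u ∈ s, f (e u) = ∑ u ∈ s, f u := fun f =>
    sum_equiv e (fun u => (he u).symm) fun _ _ => rfl
  have htwo : 2 • ∑ u ∈ s, f u = 2 • ∑ u ∈ s, g u := by
    simpa only [sum_add_distrib, hcomp, ← two_nsmul] using sum_congr rfl h
  exact nsmul_right_injective two_ne_zero htwo

section CyclicOrder

variable {α : Type*}

section LinearOrder

variable [LinearOrder α] {x y p q s : α}

/-- The relation `p ≤ q` in the cyclic shift of the linear order that starts at `x`: the elements
`≥ x` come first, followed by those `< x`. -/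
def CycLE (x p q : α) : Prop := (x ≤ p ∧ q < x) ∨ ((x ≤ p ↔ x ≤ q) ∧ p ≤ q)

theorem CycLE.refl (x p : α) : CycLE x p p := Or.inr ⟨Iff.rfl, le_rfl⟩

theorem CycLE.of_not (h : ¬CycLE x p q) : CycLE x q p := by
  unfold CycLE at *; grind

theorem CycLE.antisymm (hpq : CycLE x p q) (hqp : CycLE x q p) : p = q := by
  unfold CycLE at *; grind

theorem CycLE.trans (hpq : CycLE x p q) (hqs : CycLE x q s) : CycLE x p s := by
  unfold CycLE at *; grind

theorem CycLE.start_left (x p : α) : CycLE x x p := by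
  unfold CycLE; grind

theorem CycLE.change_start (hxqp : CycLE x q p) (hxps : CycLE x p s) (hyqs : CycLE y q s) :
    CycLE y p s := by
  -- Were `s` strictly before `p` from `y`, both `q, s, p` and `q, p, s` would be in cyclic order.
  unfold CycLE at *; grind

theorem CycLE.ite_lt_add_ite_lt {M : Type*} [AddCommMonoid M] (hx : CycLE x q p)
    (hy : CycLE y q p) (c : M) :
    (if p < y then c else 0) + (if q < x then c else 0) =
      (if p < x then c else 0) + (if q < y then c else 0) := by
  rcases le_or_gt q p with hqp | hpq
  · have hx' : p < x ↔ q < x := by unfold CycLE at hx; grind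
    have hy' : p < y ↔ q < y := by unfold CycLE at hy; grind
    simp only [hx', hy', add_comm]
  · have hx' : p < x ∧ ¬q < x := by unfold CycLE at hx; grind
    have hy' : p < y ∧ ¬q < y := by unfold CycLE at hy; grind
    simp only [hx', hy', if_true, if_false]

end LinearOrder

section WellOrder

variable [ConditionallyCompleteLinearOrder α] [WellFoundedLT α]

theorem eq_csInf_iff_isLeast {T : Set α} {p : α} (hT : T.Nonempty) :
    p = sInf T ↔ IsLeast T p :=
  ⟨fun h => h ▸ isLeast_csInf hT, fun h => h.csInf_eq.symm⟩

theorem greedy_choice_iff (A : Set α) (x p : α) :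
    (({z ∈ A ∪ {p} | x ≤ z}.Nonempty → p = sInf {z ∈ A ∪ {p} | x ≤ z}) ∧
      (¬{z ∈ A ∪ {p} | x ≤ z}.Nonempty → p = sInf (A ∪ {p}))) ↔
    ∀ q ∈ A, CycLE x p q := by
  have hp : p ∈ A ∪ {p} := Or.inr rfl
  by_cases hne : {z ∈ A ∪ {p} | x ≤ z}.Nonempty
  · simp only [hne, not_true_eq_false, false_imp_iff, and_true, true_imp_iff,
      eq_csInf_iff_isLeast hne]
    constructor
    · rintro ⟨⟨-, hxp⟩, hmin⟩ q hq
      have hpq : x ≤ q → p ≤ q := fun hxq => hmin ⟨Or.inl hq, hxq⟩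
      unfold CycLE
      grind
    · intro hcyc
      obtain ⟨z, hz, hxz⟩ := hne
      unfold CycLE at hcyc
      refine ⟨⟨hp, ?_⟩, ?_⟩
      · grind
      · rintro w ⟨hw, hxw⟩
        grind
  · have hlt : ∀ z ∈ A ∪ {p}, z < x := fun z hz => not_le.1 fun hxz => hne ⟨z, hz, hxz⟩
    simp only [hne, not_false_eq_true, false_imp_iff, true_and, true_imp_iff,
      eq_csInf_iff_isLeast ⟨p, hp⟩]
    unfold CycLE
    constructor
    · rintro ⟨-, hmin⟩ q hq
      have hpq : p ≤ q := hmin (Or.inl hq)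
      grind
    · exact fun hcyc => ⟨hp, fun w hw => by grind⟩

end WellOrder

end CyclicOrder

section Diagram

variable {n : ℕ} {mu : ℕ → ℕ} {i r : ℕ}

theorem mem_dgF_s7 : (i, r) ∈ dgF n mu ↔ 1 ≤ i ∧ i ≤ n ∧ 1 ≤ r ∧ r ≤ mu i := by
  simp only [dgF, mem_biUnion, mem_image, mem_Icc, Prod.mk.injEq]
  grind

theorem mem_armF_succ (hr : 1 ≤ r) {v : ℕ × ℕ} :
    v ∈ armF n mu (i, r + 1) ↔ v ∈ dgF n mu ∧
      (v.1 < i ∧ v.2 = r + 1 ∧ mu v.1 ≤ mu i ∨ i < v.1 ∧ v.2 = r ∧ mu v.1 < mu i) := by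
  simp only [armF, augF, mem_union, mem_filter, mem_image, mem_Icc]
  grind

theorem greedyRule_iff {τ : ℕ × ℕ → ℕ} :
    GreedyRule n mu τ ↔ ∀ i r, 1 ≤ r → (i, r + 1) ∈ dgF n mu →
      ∀ v ∈ armF n mu (i, r + 1), CycLE (τ (i, r)) (τ (i, r + 1)) (τ v) := by
  simp only [GreedyRule, greedy_choice_iff, Set.forall_mem_image, mem_coe]
  constructor
  · exact fun h i r hr hu v hv => h (i, r + 1) hu (Nat.succ_le_succ hr) hv
  · rintro h ⟨i, _ | r⟩ hu hr v hv
    · exact absurd hr (by simp)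
    · exact h i r (Nat.le_of_succ_le_succ hr) hu v hv

end Diagram

section SwapColumns

variable {α : Type*} [LinearOrder α] {j i r : ℕ} {τ : ℕ × ℕ → α}

/-- Columns `j` and `j + 1` of `τ` can be interchanged in all rows `1, …, r`: in each of the rows
`2, …, r`, the entry of column `j` stays minimal against its new competitor in column `j + 1`. -/
def Swappable (j : ℕ) (τ : ℕ × ℕ → α) (r : ℕ) : Prop :=
  ∀ t ∈ Ico 1 r, CycLE (τ (j, t)) (τ (j, t + 1)) (τ (j + 1, t + 1))

theorem swappable_one (j : ℕ) (τ : ℕ × ℕ → α) : Swappable j τ 1 := by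
  simp [Swappable]

theorem swappable_succ (hr : 1 ≤ r) :
    Swappable j τ (r + 1) ↔
      Swappable j τ r ∧ CycLE (τ (j, r)) (τ (j, r + 1)) (τ (j + 1, r + 1)) := by
  rw [Swappable, ← insert_Ico_right_eq_Ico_add_one hr, forall_mem_insert, and_comm, Swappable]

open Classical in
/-- The permutation of the columns that `swapColumns j τ` performs in row `r`. -/
noncomputable def columnPerm (j : ℕ) (τ : ℕ × ℕ → α) (r : ℕ) : Equiv.Perm ℕ :=
  if Swappable j τ r then Equiv.swap j (j + 1) else 1

/-- The filling obtained from `τ` by interchanging columns `j` and `j + 1` in the swappable rows,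
the involution behind the theorem. -/
noncomputable def swapColumns (j : ℕ) (τ : ℕ × ℕ → α) : ℕ × ℕ → α :=
  τ ∘ Equiv.prodCongrLeft (columnPerm j τ)

theorem swapColumns_apply : swapColumns j τ (i, r) = τ (columnPerm j τ r i, r) := rfl

theorem columnPerm_of_swappable (h : Swappable j τ r) :
    columnPerm j τ r = Equiv.swap j (j + 1) := if_pos h

theorem columnPerm_of_not_swappable (h : ¬Swappable j τ r) : columnPerm j τ r = 1 := if_neg h

theorem columnPerm_apply_eq_or (j : ℕ) (τ : ℕ × ℕ → α) (r i : ℕ) :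
    columnPerm j τ r i = i ∨ columnPerm j τ r i = Equiv.swap j (j + 1) i := by
  by_cases h : Swappable j τ r
  · exact Or.inr (by rw [columnPerm_of_swappable h])
  · exact Or.inl (by rw [columnPerm_of_not_swappable h, Equiv.Perm.one_apply])

theorem swapColumns_of_ne (hj : i ≠ j) (hj' : i ≠ j + 1) :
    swapColumns j τ (i, r) = τ (i, r) := by
  obtain h | h := columnPerm_apply_eq_or j τ r i
  · rw [swapColumns_apply, h]
  · rw [swapColumns_apply, h, Equiv.swap_apply_of_ne_of_ne hj hj']

theorem swapColumns_left (h : Swappable j τ r) : swapColumns j τ (j, r) = τ (j + 1, r) := by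
  rw [swapColumns_apply, columnPerm_of_swappable h, Equiv.swap_apply_left]

theorem swapColumns_right (h : Swappable j τ r) : swapColumns j τ (j + 1, r) = τ (j, r) := by
  rw [swapColumns_apply, columnPerm_of_swappable h, Equiv.swap_apply_right]

theorem swapColumns_of_not_swappable (h : ¬Swappable j τ r) :
    swapColumns j τ (i, r) = τ (i, r) := by
  rw [swapColumns_apply, columnPerm_of_not_swappable h, Equiv.Perm.one_apply]

/-- `SwapStep x y p q x' y' p' q'` lists the effect of `swapColumns` on the entries of the columns
`j` and `j + 1` in two consecutive rows: `x, y` are the entries of the lower row, `p, q` those of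
the upper one, and the primed letters are the new entries. The three cases are that both rows are
interchanged, that the interchange stops between them, and that it stopped before. -/
inductive SwapStep (x y p q : α) : α → α → α → α → Prop
  | both (h : CycLE x p q) : SwapStep x y p q y x q p
  | lower (h : ¬CycLE x p q) : SwapStep x y p q y x p q
  | neither : SwapStep x y p q x y p q

theorem swapStep_swapColumns (hr : 1 ≤ r) :
    SwapStep (τ (j, r)) (τ (j + 1, r)) (τ (j, r + 1)) (τ (j + 1, r + 1))
      (swapColumns j τ (j, r)) (swapColumns j τ (j + 1, r))
      (swapColumns j τ (j, r + 1)) (swapColumns j τ (j + 1, r + 1)) := by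
  by_cases hlow : Swappable j τ r
  · by_cases hcyc : CycLE (τ (j, r)) (τ (j, r + 1)) (τ (j + 1, r + 1))
    · have hup : Swappable j τ (r + 1) := (swappable_succ hr).2 ⟨hlow, hcyc⟩
      simpa only [swapColumns_left, swapColumns_right, hlow, hup] using .both hcyc
    · have hup : ¬Swappable j τ (r + 1) := fun h => hcyc ((swappable_succ hr).1 h).2
      simpa only [swapColumns_left, swapColumns_right, swapColumns_of_not_swappable, hlow, hup,
        not_false_eq_true] using .lower hcyc
  · have hup : ¬Swappable j τ (r + 1) := fun h => hlow ((swappable_succ hr).1 h).1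
    simpa only [swapColumns_of_not_swappable, hlow, hup, not_false_eq_true] using .neither

namespace SwapStep

variable {x y p q x' y' p' q' s : α}

theorem cycLE_left (h : SwapStep x y p q x' y' p' q') (hp : CycLE x p s) (hq : CycLE y q s) :
    CycLE x' p' s := by
  cases h with
  | both => exact hq
  | lower hpq => exact (CycLE.of_not hpq).change_start hp hq
  | neither => exact hp

theorem cycLE_right (h : SwapStep x y p q x' y' p' q') (hp : CycLE x p s) (hq : CycLE y q s) :
    CycLE y' q' s := by
  cases h with
  | both => exact hp
  | lower hpq => exact (CycLE.of_not hpq).trans hp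
  | neither => exact hq

theorem cycLE_right_left (h : SwapStep x y p q x' y' p' q') (hqp : CycLE y q p) :
    CycLE y' q' p' := by
  cases h with
  | both hpq => exact hpq
  | lower hpq => exact CycLE.of_not hpq
  | neither => exact hqp

theorem ite_lt_add_ite_lt {M : Type*} [AddCommMonoid M] (h : SwapStep x y p q x' y' p' q')
    (hqp : CycLE y q p) (c : M) :
    (if p' < x' then c else 0) + (if q' < y' then c else 0) =
      (if p < x then c else 0) + (if q < y then c else 0) := by
  cases h with
  | both => exact add_comm _ _
  | lower hpq => exact (CycLE.of_not hpq).ite_lt_add_ite_lt hqp c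
  | neither => rfl

end SwapStep

theorem swappable_swapColumns (hr : 1 ≤ r)
    (hτ : ∀ t ∈ Ico 1 r, CycLE (τ (j + 1, t)) (τ (j + 1, t + 1)) (τ (j, t + 1))) :
    Swappable j (swapColumns j τ) r ↔ Swappable j τ r := by
  induction r, hr using Nat.le_induction with
  | base => exact iff_of_true (swappable_one j _) (swappable_one j τ)
  | succ r hr ih =>
    rw [← insert_Ico_right_eq_Ico_add_one hr, forall_mem_insert] at hτ
    rw [swappable_succ hr, ih hτ.2]
    refine ⟨fun ⟨hlow, hcyc⟩ => ?_, fun hup => ?_⟩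
    · by_contra hup
      rw [swapColumns_left hlow, swapColumns_of_not_swappable hup,
        swapColumns_of_not_swappable hup] at hcyc
      refine hup ((swappable_succ hr).2 ⟨hlow, ?_⟩)
      rw [hcyc.antisymm hτ.1]
      exact CycLE.refl _ _
    · have hlow := ((swappable_succ hr).1 hup).1
      rw [swapColumns_left hlow, swapColumns_left hup, swapColumns_right hup]
      exact ⟨hlow, hτ.1⟩

theorem swapColumns_swapColumns_apply
    (h : Swappable j (swapColumns j τ) r ↔ Swappable j τ r) (i : ℕ) :
    swapColumns j (swapColumns j τ) (i, r) = τ (i, r) := by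
  by_cases hr : Swappable j τ r
  · rw [swapColumns_apply, swapColumns_apply, columnPerm_of_swappable hr,
      columnPerm_of_swappable (h.2 hr), Equiv.swap_apply_self]
  · rw [swapColumns_of_not_swappable (h.not.2 hr), swapColumns_of_not_swappable hr]

end SwapColumns

/-- The columns `j` and `j + 1` of the diagram of `mu` exist and have the same height. -/
structure EqualColumns (n : ℕ) (mu : ℕ → ℕ) (j : ℕ) : Prop where
  one_le : 1 ≤ j
  lt : j < n
  height_eq : mu j = mu (j + 1)

namespace EqualColumns

variable {n : ℕ} {mu : ℕ → ℕ} {j i r : ℕ} {τ : ℕ × ℕ → ℕ}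

theorem height_swap (h : EqualColumns n mu j) (i : ℕ) :
    mu (Equiv.swap j (j + 1) i) = mu i := by
  rw [Equiv.swap_apply_def]
  grind [h.height_eq]

theorem mem_dgF_swap (h : EqualColumns n mu j) :
    (Equiv.swap j (j + 1) i, r) ∈ dgF n mu ↔ (i, r) ∈ dgF n mu := by
  rw [mem_dgF_s7, mem_dgF_s7, h.height_swap, Equiv.swap_apply_def]
  grind [h.one_le, h.lt]

theorem mem_dgF_succ (h : EqualColumns n mu j) :
    (j + 1, r) ∈ dgF n mu ↔ (j, r) ∈ dgF n mu := by
  rw [← h.mem_dgF_swap, Equiv.swap_apply_right]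

theorem mem_dgF_columnPerm (h : EqualColumns n mu j) (τ : ℕ × ℕ → ℕ) :
    (columnPerm j τ r i, r) ∈ dgF n mu ↔ (i, r) ∈ dgF n mu := by
  obtain hi | hi := columnPerm_apply_eq_or j τ r i
  · rw [hi]
  · rw [hi, h.mem_dgF_swap]

theorem mem_armF_swap (h : EqualColumns n mu j) (hr : 1 ≤ r) (hj : i ≠ j) (hj' : i ≠ j + 1)
    {v : ℕ × ℕ} :
    (Equiv.swap j (j + 1) v.1, v.2) ∈ armF n mu (i, r + 1) ↔ v ∈ armF n mu (i, r + 1) := by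
  rw [mem_armF_succ hr, mem_armF_succ hr, h.mem_dgF_swap, h.height_swap, Equiv.swap_apply_def]
  grind

theorem fst_ne_of_mem_armF (h : EqualColumns n mu j) (hr : 1 ≤ r) {v : ℕ × ℕ}
    (hv : v ∈ armF n mu (j, r + 1)) : v.1 ≠ j ∧ v.1 ≠ j + 1 := by
  rw [mem_armF_succ hr] at hv
  grind [h.height_eq]

theorem armF_succ (h : EqualColumns n mu j) (hr : 1 ≤ r) (hmem : (j, r + 1) ∈ dgF n mu) :
    armF n mu (j + 1, r + 1) = insert (j, r + 1) (armF n mu (j, r + 1)) := by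
  ext v
  rw [mem_insert, mem_armF_succ hr, mem_armF_succ hr]
  grind [h.height_eq]

theorem mem_armF_columnPerm (h : EqualColumns n mu j) (hr : 1 ≤ r) (hj : i ≠ j)
    (hj' : i ≠ j + 1) (τ : ℕ × ℕ → ℕ) {v : ℕ × ℕ} (hv : v ∈ armF n mu (i, r + 1)) :
    (columnPerm j τ v.2 v.1, v.2) ∈ armF n mu (i, r + 1) := by
  obtain hi | hi := columnPerm_apply_eq_or j τ v.2 v.1
  · rwa [hi]
  · rwa [hi, h.mem_armF_swap hr hj hj']

theorem cycLE_of_greedyRule (h : EqualColumns n mu j) (hτ : GreedyRule n mu τ) (hr : 1 ≤ r)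
    (hmem : (j, r + 1) ∈ dgF n mu) :
    CycLE (τ (j + 1, r)) (τ (j + 1, r + 1)) (τ (j, r + 1)) := by
  refine greedyRule_iff.1 hτ _ _ hr (h.mem_dgF_succ.2 hmem) _ ?_
  rw [h.armF_succ hr hmem]
  exact mem_insert_self _ _

theorem cycLE_swapColumns_of_mem_armF (h : EqualColumns n mu j) (hτ : GreedyRule n mu τ)
    (hr : 1 ≤ r) (hmem : (j, r + 1) ∈ dgF n mu) {v : ℕ × ℕ} (hv : v ∈ armF n mu (j, r + 1)) :
    CycLE (τ (j, r)) (τ (j, r + 1)) (swapColumns j τ v) ∧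
      CycLE (τ (j + 1, r)) (τ (j + 1, r + 1)) (swapColumns j τ v) := by
  obtain ⟨hvj, hvj'⟩ := h.fst_ne_of_mem_armF hr hv
  have hv' : v ∈ armF n mu (j + 1, r + 1) := by
    rw [h.armF_succ hr hmem]
    exact mem_insert_of_mem hv
  rw [← Prod.mk.eta (p := v), swapColumns_of_ne hvj hvj']
  exact ⟨greedyRule_iff.1 hτ _ _ hr hmem v hv,
    greedyRule_iff.1 hτ _ _ hr (h.mem_dgF_succ.2 hmem) v hv'⟩

theorem greedyRule_swapColumns (h : EqualColumns n mu j) (hτ : GreedyRule n mu τ) :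
    GreedyRule n mu (swapColumns j τ) := by
  rw [greedyRule_iff]
  intro i r hr hmem v hv
  by_cases hi : i = j ∨ i = j + 1
  · have hmemj : (j, r + 1) ∈ dgF n mu := by
      obtain rfl | rfl := hi
      exacts [hmem, h.mem_dgF_succ.1 hmem]
    have hstep := swapStep_swapColumns (j := j) (τ := τ) hr
    obtain rfl | rfl := hi
    · obtain ⟨hp, hq⟩ := h.cycLE_swapColumns_of_mem_armF hτ hr hmemj hv
      exact hstep.cycLE_left hp hq
    · rw [h.armF_succ hr hmemj, mem_insert] at hv
      obtain rfl | hv := hv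
      · exact hstep.cycLE_right_left (h.cycLE_of_greedyRule hτ hr hmemj)
      · obtain ⟨hp, hq⟩ := h.cycLE_swapColumns_of_mem_armF hτ hr hmemj hv
        exact hstep.cycLE_right hp hq
  · rw [not_or] at hi
    rw [swapColumns_of_ne hi.1 hi.2, swapColumns_of_ne hi.1 hi.2]
    exact greedyRule_iff.1 hτ _ _ hr hmem _ (h.mem_armF_columnPerm hr hi.1 hi.2 τ hv)

theorem swapColumns_ne_of_row (h : EqualColumns n mu j)
    (hτ : ∀ u ∈ dgF n mu, ∀ v ∈ dgF n mu, Attack u v → τ u ≠ τ v) {i' : ℕ}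
    (hi : (i, r) ∈ dgF n mu) (hi' : (i', r) ∈ dgF n mu) (hne : i ≠ i') :
    swapColumns j τ (i, r) ≠ swapColumns j τ (i', r) := by
  refine hτ _ ((h.mem_dgF_columnPerm τ).2 hi) _ ((h.mem_dgF_columnPerm τ).2 hi')
    ⟨fun heq => hne ?_, Or.inl rfl⟩
  exact (columnPerm j τ r).injective (congrArg Prod.fst heq)

theorem swapColumns_ne_of_row_succ (h : EqualColumns n mu j) (hgreedy : GreedyRule n mu τ)
    (hτ : ∀ u ∈ dgF n mu, ∀ v ∈ dgF n mu, Attack u v → τ u ≠ τ v) {i' : ℕ}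
    (hi : (i, r + 1) ∈ dgF n mu) (hi' : (i', r) ∈ dgF n mu) (hlt : i < i') :
    swapColumns j τ (i, r + 1) ≠ swapColumns j τ (i', r) := by
  by_cases hadj : i = j ∧ i' = j + 1
  · obtain ⟨rfl, rfl⟩ := hadj
    intro heq
    have hr : 1 ≤ r := (mem_dgF_s7.1 hi').2.2.1
    have hcyc := h.cycLE_of_greedyRule (h.greedyRule_swapColumns hgreedy) hr hi
    rw [heq] at hcyc
    exact h.swapColumns_ne_of_row hτ hi (h.mem_dgF_succ.2 hi) hlt.ne
      (heq.trans (hcyc.antisymm (CycLE.start_left _ _)).symm)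
  · have hlt' : columnPerm j τ (r + 1) i < columnPerm j τ r i' := by
      have hci := columnPerm_apply_eq_or j τ (r + 1) i
      have hci' := columnPerm_apply_eq_or j τ r i'
      rw [Equiv.swap_apply_def] at hci hci'
      grind
    exact hτ _ ((h.mem_dgF_columnPerm τ).2 hi) _ ((h.mem_dgF_columnPerm τ).2 hi')
      ⟨fun heq => hlt'.ne (congrArg Prod.fst heq), Or.inr (Or.inl ⟨rfl, hlt'⟩)⟩

theorem swapColumns_ne_of_attack (h : EqualColumns n mu j) (hgreedy : GreedyRule n mu τ)
    (hτ : ∀ u ∈ dgF n mu, ∀ v ∈ dgF n mu, Attack u v → τ u ≠ τ v) :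
    ∀ u ∈ dgF n mu, ∀ v ∈ dgF n mu, Attack u v → swapColumns j τ u ≠ swapColumns j τ v := by
  rintro ⟨i, r⟩ hu ⟨i', r'⟩ hv ⟨hne, hrow | ⟨hrow, hlt⟩ | ⟨hrow, hlt⟩⟩ <;>
    dsimp only at hrow <;> subst hrow
  · exact h.swapColumns_ne_of_row hτ hu hv fun hi => hne (by rw [hi])
  · exact h.swapColumns_ne_of_row_succ hgreedy hτ hu hv hlt
  · exact (h.swapColumns_ne_of_row_succ hgreedy hτ hv hu hlt).symm

theorem card_filter_swapColumns (h : EqualColumns n mu j) (τ : ℕ × ℕ → ℕ) (c : ℕ) :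
    ((dgF n mu).filter fun u => swapColumns j τ u = c).card =
      ((dgF n mu).filter fun u => τ u = c).card := by
  refine card_equiv (Equiv.prodCongrLeft (columnPerm j τ)) fun ⟨i, r⟩ => ?_
  simp [swapColumns_apply, h.mem_dgF_columnPerm]

theorem cCond_swapColumns (h : EqualColumns n mu j) {a k : ℕ → ℕ} (hτ : CCond n mu a k τ) :
    CCond n mu (a ∘ Equiv.swap j (j + 1)) k (swapColumns j τ) := by
  obtain ⟨hrange, hbase, hattack, hgreedy, hcard⟩ := hτ
  refine ⟨fun u hu => hrange _ ((h.mem_dgF_columnPerm τ).2 hu), fun i hi => ?_,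
    h.swapColumns_ne_of_attack hgreedy hattack, h.greedyRule_swapColumns hgreedy,
    fun c hc hcn => (h.card_filter_swapColumns τ c).trans (hcard c hc hcn)⟩
  rw [swapColumns_apply, columnPerm_of_swappable (swappable_one j τ)]
  exact hbase _ (h.mem_dgF_swap.2 hi)

theorem swapColumns_swapColumns_of_mem (h : EqualColumns n mu j) (hτ : GreedyRule n mu τ)
    {u : ℕ × ℕ} (hu : u ∈ dgF n mu) : swapColumns j (swapColumns j τ) u = τ u := by
  obtain ⟨i, r⟩ := u
  by_cases hi : i = j ∨ i = j + 1
  · have hmem : (j, r) ∈ dgF n mu := by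
      obtain rfl | rfl := hi
      exacts [hu, h.mem_dgF_succ.1 hu]
    refine swapColumns_swapColumns_apply (swappable_swapColumns (mem_dgF_s7.1 hmem).2.2.1 ?_) i
    intro t ht
    refine h.cycLE_of_greedyRule hτ (mem_Ico.1 ht).1 ?_
    rw [mem_dgF_s7] at hmem ⊢
    grind
  · rw [not_or] at hi
    rw [swapColumns_of_ne hi.1 hi.2, swapColumns_of_ne hi.1 hi.2]

theorem ascStat_swapColumns (h : EqualColumns n mu j) (hτ : GreedyRule n mu τ) :
    ascStat n mu (swapColumns j τ) = ascStat n mu τ := by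
  simp only [ascStat, sum_filter]
  refine sum_eq_sum_of_add_comp_perm ((Equiv.swap j (j + 1)).prodCongr (Equiv.refl ℕ))
    (fun u => h.mem_dgF_swap) ?_
  rintro ⟨i, r⟩ hu
  obtain hr | ⟨r, rfl, hr⟩ : r < 2 ∨ ∃ t, r = t + 1 ∧ 1 ≤ t := by
    rcases r with _ | r
    · simp
    · grind
  · simp [hr.not_ge]
  simp only [Equiv.prodCongr_apply, Prod.map, Equiv.refl_apply, dbox, Nat.add_sub_cancel,
    h.height_swap, Nat.succ_le_succ hr, true_and]
  have hpair (hmem : (j, r + 1) ∈ dgF n mu) :=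
    (swapStep_swapColumns (j := j) (τ := τ) hr).ite_lt_add_ite_lt
      (h.cycLE_of_greedyRule hτ hr hmem) (mu i - (r + 1) + 1)
  by_cases hj : i = j
  · subst hj
    rw [Equiv.swap_apply_left]
    exact hpair hu
  by_cases hj' : i = j + 1
  · subst hj'
    rw [Equiv.swap_apply_right, add_comm, hpair (h.mem_dgF_succ.1 hu), add_comm]
  · simp only [Equiv.swap_apply_of_ne_of_ne hj hj', swapColumns_of_ne hj hj']

end EqualColumns

section Fillings

variable {n : ℕ} {mu a k : ℕ → ℕ} {j : ℕ}

open Classical in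
/-- The fillings, as functions on the boxes of the diagram, over which `cCoef n mu a k` sums. -/
noncomputable def cFillings (n : ℕ) (mu a k : ℕ → ℕ) : Finset ({u // u ∈ dgF n mu} → ℕ) :=
  (Fintype.piFinset fun _ => Icc 1 n).filter fun f => CCond n mu a k (ext n mu f)

theorem ext_coe (f : {u // u ∈ dgF n mu} → ℕ) (u : {u // u ∈ dgF n mu}) :
    ext n mu f u = f u := dif_pos u.2

theorem mem_cFillings {f : {u // u ∈ dgF n mu} → ℕ} :
    f ∈ cFillings n mu a k ↔ CCond n mu a k (ext n mu f) := by
  classical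
  rw [cFillings, mem_filter, and_iff_right_iff_imp, Fintype.mem_piFinset]
  intro hf u
  rw [mem_Icc, ← ext_coe f u]
  exact hf.1 u u.2

theorem greedyRule_of_mem_cFillings {f : {u // u ∈ dgF n mu} → ℕ}
    (hf : f ∈ cFillings n mu a k) : GreedyRule n mu (ext n mu f) :=
  (mem_cFillings.1 hf).2.2.2.1

/-- The map `swapColumns j` on fillings given on the boxes of the diagram only. -/
noncomputable def swapFilling (j : ℕ) (f : {u // u ∈ dgF n mu} → ℕ) :
    {u // u ∈ dgF n mu} → ℕ :=
  fun u => swapColumns j (ext n mu f) u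

namespace EqualColumns

theorem ext_swapFilling (h : EqualColumns n mu j) (f : {u // u ∈ dgF n mu} → ℕ) :
    ext n mu (swapFilling j f) = swapColumns j (ext n mu f) := by
  funext ⟨i, r⟩
  by_cases hu : (i, r) ∈ dgF n mu
  · exact dif_pos hu
  · rw [swapColumns_apply, ext, dif_neg hu, ext, dif_neg ((h.mem_dgF_columnPerm _).not.2 hu)]

theorem swapFilling_mem_cFillings (h : EqualColumns n mu j) {f : {u // u ∈ dgF n mu} → ℕ}
    (hf : f ∈ cFillings n mu a k) :
    swapFilling j f ∈ cFillings n mu (a ∘ Equiv.swap j (j + 1)) k := by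
  rw [mem_cFillings, h.ext_swapFilling]
  exact h.cCond_swapColumns (mem_cFillings.1 hf)

theorem swapFilling_swapFilling (h : EqualColumns n mu j) {f : {u // u ∈ dgF n mu} → ℕ}
    (hf : GreedyRule n mu (ext n mu f)) : swapFilling j (swapFilling j f) = f := by
  funext u
  rw [swapFilling, h.ext_swapFilling, h.swapColumns_swapColumns_of_mem hf u.2, ext_coe]

end EqualColumns

end Fillings

end CO

open CO in
theorem c_transposition_general (n : ℕ) (mu : ℕ → ℕ) (j : ℕ) (hj : 1 ≤ j) (hjn : j < n)
    (heq : mu j = mu (j + 1)) (a k : ℕ → ℕ) :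
    cCoef n mu a k = cCoef n mu (a ∘ Equiv.swap j (j + 1)) k := by
  have h : EqualColumns n mu j := ⟨hj, hjn, heq⟩
  have hswap : (a ∘ Equiv.swap j (j + 1)) ∘ Equiv.swap j (j + 1) = a := by
    funext i
    simp
  refine sum_nbij' (s := cFillings n mu a k) (t := cFillings n mu (a ∘ Equiv.swap j (j + 1)) k)
    (swapFilling j) (swapFilling j) (fun f hf => h.swapFilling_mem_cFillings hf)
    (fun f hf => hswap ▸ h.swapFilling_mem_cFillings hf)
    (fun f hf => h.swapFilling_swapFilling (greedyRule_of_mem_cFillings hf))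
    (fun f hf => h.swapFilling_swapFilling (greedyRule_of_mem_cFillings hf)) fun f hf => ?_
  rw [h.ext_swapFilling, h.ascStat_swapColumns (greedyRule_of_mem_cFillings hf)]

open CO in
/-- Proposition `transpositioncolumns`. If `μ_j = μ_{j+1}` for two
consecutive columns of the bottom row, interchanging the corresponding entries of
the bottom-row tuple `a` does not change `c_a^μ(k)`. -/
theorem c_transposition (n : ℕ) (hn : 1 ≤ n) (mu : ℕ → ℕ) (hanti : Antidominant n mu)
    (s : ℕ) (hs1 : 1 ≤ s) (hsn : s ≤ n)
    (hzero : ∀ i, 1 ≤ i → i ≤ n - s → mu i = 0) (hpos : 1 ≤ mu (n - s + 1))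
    (a : ℕ → ℕ) (ha : ∀ j ∈ Finset.Icc (n - s + 1) n, a j ∈ Finset.Icc 1 n)
    (hainj : ∀ j ∈ Finset.Icc (n - s + 1) n, ∀ j' ∈ Finset.Icc (n - s + 1) n,
      a j = a j' → j = j')
    (j : ℕ) (hj1 : n - s + 1 ≤ j) (hj2 : j ≤ n - 1) (heq : mu j = mu (j + 1))
    (a' : ℕ → ℕ)
    (ha' : a' = fun i => if i = j then a (j + 1) else if i = j + 1 then a j else a i)
    (k : ℕ → ℕ) :
    cCoef n mu a k = cCoef n mu a' k := by
  have hswap : a' = a ∘ Equiv.swap j (j + 1) := by grind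
  exact hswap ▸ c_transposition_general n mu j (by omega) (by omega) heq a k
end
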